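/- (Factorization D_2 = D_1 D_1^T) Let m ≥ 3 and k ≥ 1, and set c = m+2k. For the 2×2 operator matrix D_1 with entries D_1[1,1] = −R_k P_k^+, D_1[1,2] = 2T_k^* P_k^+/√(c(c−4)), D_1[2,1] = 2T_k P_k^−/(c−4), D_1[2,2] = √(c/(c−4)) Q_k P_k^−, and its transpose D_1^T (entries D_1^T[i,j] = D_1[j,i]), the product D_1 D_1^T equals the matrix operator D_2 with entries D_2[1,1] = R_k² P_k^+, D_2[1,2] = −2R_k T_k P_k^−/(c−4), D_2[2,1] = 2Q_k T_k^* P_k^+/(c−4), D_2[2,2] = (c/(c−4)) Q_k² P_k^−; i.e., for all smooth f_1 ∈ C^∞(ℝ^m, M_k) and f_2 ∈ C^∞(ℝ^m, uM_{k−1}), applying D_1 followed by D_1^T to the pair (f_1, f_2) componentwise gives the same pair of functions as applying D_2. -/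

import Mathlib

open scoped BigOperators

/-- The defining Clifford relations `e i * e j + e j * e i = -2 δ_{ij}` for the
generators of the real Clifford algebra `Cl_m`. -/
def CliffordRel {m : ℕ} {Cl : Type*} [Ring Cl] [Algebra ℝ Cl] (e : Fin m → Cl) : Prop :=
  ∀ i j : Fin m, e i * e j + e j * e i = algebraMap ℝ Cl (if i = j then -2 else 0)

/-- The embedding of `ℝ^m` into the Clifford algebra, `x ↦ ∑ j, x j • e j`. -/
def emb {m : ℕ} {Cl : Type*} [Ring Cl] [Algebra ℝ Cl] (e : Fin m → Cl)
    (x : Fin m → ℝ) : Cl :=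
  ∑ j, x j • e j

/-- The partial derivative `∂f/∂x_j`. -/
noncomputable def pd {m : ℕ} {E : Type*} [NormedAddCommGroup E] [NormedSpace ℝ E]
    (j : Fin m) (f : (Fin m → ℝ) → E) : (Fin m → ℝ) → E :=
  fun x => fderiv ℝ f x (Pi.single j 1)

/-- The Laplacian `Δ f = ∑ j, ∂²f/∂x_j²`. -/
noncomputable def lap {m : ℕ} {E : Type*} [NormedAddCommGroup E] [NormedSpace ℝ E]
    (f : (Fin m → ℝ) → E) : (Fin m → ℝ) → E :=
  fun x => ∑ j, pd j (pd j f) x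

/-- The Dirac operator `D f = ∑ j, e j * ∂f/∂x_j` (left Clifford multiplication). -/
noncomputable def dirac {m : ℕ} {Cl : Type*} [NormedRing Cl] [NormedAlgebra ℝ Cl]
    (e : Fin m → Cl) (f : (Fin m → ℝ) → Cl) : (Fin m → ℝ) → Cl :=
  fun x => ∑ j, e j * pd j f x

/-- `f : ℝ^m → E` is a (module-valued) polynomial homogeneous of degree `k`:
it lies in the real span of the monomial functions `x ↦ (∏ i, x i ^ α i) • c`
with total degree `∑ i, α i = k`. -/
def IsHomPoly {m : ℕ} {E : Type*} [AddCommGroup E] [Module ℝ E] (k : ℕ)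
    (f : (Fin m → ℝ) → E) : Prop :=
  f ∈ Submodule.span ℝ {g : (Fin m → ℝ) → E |
    ∃ (α : Fin m → ℕ) (c : E), (∑ i, α i) = k ∧ g = fun x => (∏ i, x i ^ α i) • c}

/-- Partial derivative `∂/∂x_j` of a function of two variables `(x, u)`. -/
noncomputable def pdx {m : ℕ} {E : Type*} [NormedAddCommGroup E] [NormedSpace ℝ E]
    (j : Fin m) (f : (Fin m → ℝ) → (Fin m → ℝ) → E) :
    (Fin m → ℝ) → (Fin m → ℝ) → E :=
  fun x u => fderiv ℝ (fun y => f y u) x (Pi.single j 1)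

/-- Partial derivative `∂/∂u_j` of a function of two variables `(x, u)`. -/
noncomputable def pdu {m : ℕ} {E : Type*} [NormedAddCommGroup E] [NormedSpace ℝ E]
    (j : Fin m) (f : (Fin m → ℝ) → (Fin m → ℝ) → E) :
    (Fin m → ℝ) → (Fin m → ℝ) → E :=
  fun x u => fderiv ℝ (fun v => f x v) u (Pi.single j 1)

/-- The Laplacian `Δ_x` in the variable `x`. -/
noncomputable def lapx {m : ℕ} {E : Type*} [NormedAddCommGroup E] [NormedSpace ℝ E]
    (f : (Fin m → ℝ) → (Fin m → ℝ) → E) : (Fin m → ℝ) → (Fin m → ℝ) → E :=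
  fun x u => ∑ j, pdx j (pdx j f) x u

/-- The mixed operator `⟨∇_u, ∇_x⟩ = ∑ j, ∂_{u_j} ∂_{x_j}`. -/
noncomputable def mixDer {m : ℕ} {E : Type*} [NormedAddCommGroup E] [NormedSpace ℝ E]
    (f : (Fin m → ℝ) → (Fin m → ℝ) → E) : (Fin m → ℝ) → (Fin m → ℝ) → E :=
  fun x u => ∑ j, pdu j (pdx j f) x u

/-- The Dirac operator `D_x = ∑ j, e j ∂_{x_j}` acting in the variable `x`. -/
noncomputable def diracx {m : ℕ} {Cl : Type*} [NormedRing Cl] [NormedAlgebra ℝ Cl]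
    (e : Fin m → Cl) (f : (Fin m → ℝ) → (Fin m → ℝ) → Cl) :
    (Fin m → ℝ) → (Fin m → ℝ) → Cl :=
  fun x u => ∑ j, e j * pdx j f x u

/-- The Dirac operator `D_u = ∑ j, e j ∂_{u_j}` acting in the variable `u`. -/
noncomputable def diracu {m : ℕ} {Cl : Type*} [NormedRing Cl] [NormedAlgebra ℝ Cl]
    (e : Fin m → Cl) (f : (Fin m → ℝ) → (Fin m → ℝ) → Cl) :
    (Fin m → ℝ) → (Fin m → ℝ) → Cl :=
  fun x u => ∑ j, e j * pdu j f x u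

/-- The bosonic Laplacian (higher spin Laplace operator)
`D_k = Δ_x − 4⟨u,∇_x⟩⟨∇_u,∇_x⟩/(m+2k−2) + 4|u|²⟨∇_u,∇_x⟩²/((m+2k−2)(m+2k−4))`. -/
noncomputable def bosonic {m : ℕ} (k : ℕ) {E : Type*} [NormedAddCommGroup E]
    [NormedSpace ℝ E] (f : (Fin m → ℝ) → (Fin m → ℝ) → E) :
    (Fin m → ℝ) → (Fin m → ℝ) → E :=
  fun x u =>
    lapx f x u
      - (4 / ((m : ℝ) + 2 * k - 2)) • ∑ s, u s • pdx s (mixDer f) x u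
      + (4 / (((m : ℝ) + 2 * k - 2) * ((m : ℝ) + 2 * k - 4))) •
          ((∑ i, u i ^ 2) • mixDer (mixDer f) x u)

/-- The projection `P_k^+ = I + u D_u/(m+2k−2)` acting in the variable `u`
(`u` acts by left Clifford multiplication). -/
noncomputable def PpU {m : ℕ} {Cl : Type*} [NormedRing Cl] [NormedAlgebra ℝ Cl]
    (e : Fin m → Cl) (k : ℕ) (f : (Fin m → ℝ) → (Fin m → ℝ) → Cl) :
    (Fin m → ℝ) → (Fin m → ℝ) → Cl :=
  fun x u => f x u + ((m : ℝ) + 2 * k - 2)⁻¹ • (emb e u * diracu e f x u)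

/-- The projection `P_k^- = −u D_u/(m+2k−2)` acting in the variable `u`. -/
noncomputable def PmU {m : ℕ} {Cl : Type*} [NormedRing Cl] [NormedAlgebra ℝ Cl]
    (e : Fin m → Cl) (k : ℕ) (f : (Fin m → ℝ) → (Fin m → ℝ) → Cl) :
    (Fin m → ℝ) → (Fin m → ℝ) → Cl :=
  fun x u => -(((m : ℝ) + 2 * k - 2)⁻¹ • (emb e u * diracu e f x u))

/-- `P_k^+ D_x`: this is the Rarita–Schwinger operator `R_k` on `C^∞(ℝ^m, M_k)` and the
twistor operator `T_k` on `C^∞(ℝ^m, uM_{k-1})`. -/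
noncomputable def PpDx {m : ℕ} {Cl : Type*} [NormedRing Cl] [NormedAlgebra ℝ Cl]
    (e : Fin m → Cl) (k : ℕ) (f : (Fin m → ℝ) → (Fin m → ℝ) → Cl) :
    (Fin m → ℝ) → (Fin m → ℝ) → Cl :=
  PpU e k (diracx e f)

/-- `P_k^- D_x`: this is the dual twistor operator `T_k^*` on `C^∞(ℝ^m, M_k)` and the
remaining operator `Q_k` on `C^∞(ℝ^m, uM_{k-1})`. -/
noncomputable def PmDx {m : ℕ} {Cl : Type*} [NormedRing Cl] [NormedAlgebra ℝ Cl]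
    (e : Fin m → Cl) (k : ℕ) (f : (Fin m → ℝ) → (Fin m → ℝ) → Cl) :
    (Fin m → ℝ) → (Fin m → ℝ) → Cl :=
  PmU e k (diracx e f)

/-- First component of the matrix operator `D₁` applied to the pair `(g₁, g₂)`:
`D₁[1,1] g₁ + D₁[1,2] g₂ = −R_k P_k^+ g₁ + (2/√(c(c−4))) T_k^* P_k^+ g₂`, `c = m+2k`. -/
noncomputable def D1fst {m : ℕ} {Cl : Type*} [NormedRing Cl] [NormedAlgebra ℝ Cl]
    (e : Fin m → Cl) (k : ℕ) (g₁ g₂ : (Fin m → ℝ) → (Fin m → ℝ) → Cl) :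
    (Fin m → ℝ) → (Fin m → ℝ) → Cl :=
  fun x u => -(PpDx e k (PpU e k g₁) x u)
    + (2 / Real.sqrt (((m : ℝ) + 2 * k) * ((m : ℝ) + 2 * k - 4))) •
        PmDx e k (PpU e k g₂) x u

/-- Second component of the matrix operator `D₁` applied to `(g₁, g₂)`:
`D₁[2,1] g₁ + D₁[2,2] g₂ = (2/(c−4)) T_k P_k^- g₁ + √(c/(c−4)) Q_k P_k^- g₂`. -/
noncomputable def D1snd {m : ℕ} {Cl : Type*} [NormedRing Cl] [NormedAlgebra ℝ Cl]
    (e : Fin m → Cl) (k : ℕ) (g₁ g₂ : (Fin m → ℝ) → (Fin m → ℝ) → Cl) :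
    (Fin m → ℝ) → (Fin m → ℝ) → Cl :=
  fun x u => (2 / ((m : ℝ) + 2 * k - 4)) • PpDx e k (PmU e k g₁) x u
    + Real.sqrt (((m : ℝ) + 2 * k) / ((m : ℝ) + 2 * k - 4)) •
        PmDx e k (PmU e k g₂) x u

/-- First component of the transposed matrix operator `D₁ᵀ` (entries `D₁ᵀ[i,j] = D₁[j,i]`)
applied to `(g₁, g₂)`: `D₁[1,1] g₁ + D₁[2,1] g₂`. -/
noncomputable def D1Tfst {m : ℕ} {Cl : Type*} [NormedRing Cl] [NormedAlgebra ℝ Cl]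
    (e : Fin m → Cl) (k : ℕ) (g₁ g₂ : (Fin m → ℝ) → (Fin m → ℝ) → Cl) :
    (Fin m → ℝ) → (Fin m → ℝ) → Cl :=
  fun x u => -(PpDx e k (PpU e k g₁) x u)
    + (2 / ((m : ℝ) + 2 * k - 4)) • PpDx e k (PmU e k g₂) x u

/-- Second component of the transposed matrix operator `D₁ᵀ` applied to `(g₁, g₂)`:
`D₁[1,2] g₁ + D₁[2,2] g₂`. -/
noncomputable def D1Tsnd {m : ℕ} {Cl : Type*} [NormedRing Cl] [NormedAlgebra ℝ Cl]
    (e : Fin m → Cl) (k : ℕ) (g₁ g₂ : (Fin m → ℝ) → (Fin m → ℝ) → Cl) :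
    (Fin m → ℝ) → (Fin m → ℝ) → Cl :=
  fun x u => (2 / Real.sqrt (((m : ℝ) + 2 * k) * ((m : ℝ) + 2 * k - 4))) •
      PmDx e k (PpU e k g₁) x u
    + Real.sqrt (((m : ℝ) + 2 * k) / ((m : ℝ) + 2 * k - 4)) •
        PmDx e k (PmU e k g₂) x u

/-- First component of the matrix operator `D₂` applied to `(g₁, g₂)`:
`R_k² P_k^+ g₁ − (2/(c−4)) R_k T_k P_k^- g₂`. -/
noncomputable def D2fst {m : ℕ} {Cl : Type*} [NormedRing Cl] [NormedAlgebra ℝ Cl]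
    (e : Fin m → Cl) (k : ℕ) (g₁ g₂ : (Fin m → ℝ) → (Fin m → ℝ) → Cl) :
    (Fin m → ℝ) → (Fin m → ℝ) → Cl :=
  fun x u => PpDx e k (PpDx e k (PpU e k g₁)) x u
    - (2 / ((m : ℝ) + 2 * k - 4)) • PpDx e k (PpDx e k (PmU e k g₂)) x u

/-- Second component of the matrix operator `D₂` applied to `(g₁, g₂)`:
`(2/(c−4)) Q_k T_k^* P_k^+ g₁ + (c/(c−4)) Q_k² P_k^- g₂`. -/
noncomputable def D2snd {m : ℕ} {Cl : Type*} [NormedRing Cl] [NormedAlgebra ℝ Cl]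
    (e : Fin m → Cl) (k : ℕ) (g₁ g₂ : (Fin m → ℝ) → (Fin m → ℝ) → Cl) :
    (Fin m → ℝ) → (Fin m → ℝ) → Cl :=
  fun x u => (2 / ((m : ℝ) + 2 * k - 4)) • PmDx e k (PmDx e k (PpU e k g₁)) x u
    + (((m : ℝ) + 2 * k) / ((m : ℝ) + 2 * k - 4)) • PmDx e k (PmDx e k (PmU e k g₂)) x u

open scoped ContDiff

section RaritaSchwinger

variable {m : ℕ} {Cl : Type*} [NormedRing Cl] [NormedAlgebra ℝ Cl]

/-- Joint smoothness of a function of the two variables `(x, u)`. -/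
def JointSmooth (f : (Fin m → ℝ) → (Fin m → ℝ) → Cl) : Prop :=
  ContDiff ℝ ∞ (fun p : (Fin m → ℝ) × (Fin m → ℝ) => f p.1 p.2)

namespace JointSmooth

variable {f g : (Fin m → ℝ) → (Fin m → ℝ) → Cl}

theorem differentiable (hf : JointSmooth f) :
    Differentiable ℝ (fun p : (Fin m → ℝ) × (Fin m → ℝ) => f p.1 p.2) :=
  ContDiff.differentiable hf (by simp)

theorem differentiableAt_fst (hf : JointSmooth f) (x u : Fin m → ℝ) :
    DifferentiableAt ℝ (fun y => f y u) x :=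
  DifferentiableAt.comp (f := fun y => (y, u)) x (hf.differentiable (x, u))
    (differentiableAt_id.prodMk (differentiableAt_const u))

theorem differentiableAt_snd (hf : JointSmooth f) (x u : Fin m → ℝ) :
    DifferentiableAt ℝ (fun v => f x v) u :=
  DifferentiableAt.comp (f := fun v => (x, v)) u (hf.differentiable (x, u))
    ((differentiableAt_const x).prodMk differentiableAt_id)

theorem pdx_eq (hf : JointSmooth f) (j : Fin m) (x u : Fin m → ℝ) :
    pdx j f x u = fderiv ℝ (fun p : (Fin m → ℝ) × (Fin m → ℝ) => f p.1 p.2) (x, u)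
      (Pi.single j 1, 0) := by
  have h := HasFDerivAt.comp (f := fun y => (y, u)) x
    (hf.differentiable (x, u)).hasFDerivAt ((hasFDerivAt_id x).prodMk (hasFDerivAt_const u x))
  have h' : fderiv ℝ (fun y => f y u) x = _ := h.fderiv
  simp [pdx, h']

theorem pdu_eq (hf : JointSmooth f) (j : Fin m) (x u : Fin m → ℝ) :
    pdu j f x u = fderiv ℝ (fun p : (Fin m → ℝ) × (Fin m → ℝ) => f p.1 p.2) (x, u)
      (0, Pi.single j 1) := by
  have h := HasFDerivAt.comp (f := fun v => (x, v)) u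
    (hf.differentiable (x, u)).hasFDerivAt ((hasFDerivAt_const x u).prodMk (hasFDerivAt_id u))
  have h' : fderiv ℝ (fun v => f x v) u = _ := h.fderiv
  simp [pdu, h']

theorem fderiv_apply (hf : JointSmooth f) (v : (Fin m → ℝ) × (Fin m → ℝ)) :
    ContDiff ℝ ∞ (fun p => fderiv ℝ
      (fun p : (Fin m → ℝ) × (Fin m → ℝ) => f p.1 p.2) p v) :=
  (ContDiff.fderiv_right hf (by simp)).clm_apply contDiff_const

theorem pdx (hf : JointSmooth f) (j : Fin m) : JointSmooth (pdx j f) := by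
  have h := hf.fderiv_apply (Pi.single j 1, 0)
  simpa only [JointSmooth, hf.pdx_eq] using h

theorem pdu (hf : JointSmooth f) (j : Fin m) : JointSmooth (pdu j f) := by
  have h := hf.fderiv_apply (0, Pi.single j 1)
  simpa only [JointSmooth, hf.pdu_eq] using h

theorem add (hf : JointSmooth f) (hg : JointSmooth g) :
    JointSmooth (fun x u => f x u + g x u) :=
  ContDiff.add hf hg

theorem smul (hf : JointSmooth f) (c : ℝ) : JointSmooth (fun x u => c • f x u) :=
  ContDiff.const_smul c hf

theorem const_mul (hf : JointSmooth f) (a : Cl) : JointSmooth (fun x u => a * f x u) :=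
  ContDiff.mul contDiff_const hf

theorem sum {ι : Type*} {s : Finset ι} {F : ι → (Fin m → ℝ) → (Fin m → ℝ) → Cl}
    (hF : ∀ i, JointSmooth (F i)) : JointSmooth (fun x u => ∑ i ∈ s, F i x u) :=
  ContDiff.sum (fun i _ => hF i)

theorem coord_smul (hf : JointSmooth f) (i : Fin m) :
    JointSmooth (fun x u => u i • f x u) :=
  ContDiff.smul ((contDiff_apply ℝ ℝ i).comp contDiff_snd) hf

theorem emb_mul (hf : JointSmooth f) (e : Fin m → Cl) :
    JointSmooth (fun x u => emb e u * f x u) := by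
  simp only [emb, Finset.sum_mul, smul_mul_assoc]
  exact sum fun j => (hf.const_mul (e j)).coord_smul j

theorem diracx (hf : JointSmooth f) (e : Fin m → Cl) : JointSmooth (diracx e f) :=
  sum fun j => (hf.pdx j).const_mul (e j)

theorem diracu (hf : JointSmooth f) (e : Fin m → Cl) : JointSmooth (diracu e f) :=
  sum fun j => (hf.pdu j).const_mul (e j)

theorem PpU (hf : JointSmooth f) (e : Fin m → Cl) (k : ℕ) : JointSmooth (PpU e k f) :=
  hf.add (((hf.diracu e).emb_mul e).smul _)

theorem PmU (hf : JointSmooth f) (e : Fin m → Cl) (k : ℕ) : JointSmooth (PmU e k f) :=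
  ContDiff.neg (((hf.diracu e).emb_mul e).smul _)

end JointSmooth

variable {f g : (Fin m → ℝ) → (Fin m → ℝ) → Cl}

theorem pdx_sum {ι : Type*} (s : Finset ι) {F : ι → (Fin m → ℝ) → (Fin m → ℝ) → Cl}
    (hF : ∀ i, JointSmooth (F i)) (j : Fin m) (x u : Fin m → ℝ) :
    pdx j (fun x u => ∑ i ∈ s, F i x u) x u = ∑ i ∈ s, pdx j (F i) x u := by
  simp only [pdx]
  rw [fderiv_fun_sum fun i _ => (hF i).differentiableAt_fst x u]
  simp

theorem pdu_sum {ι : Type*} (s : Finset ι) {F : ι → (Fin m → ℝ) → (Fin m → ℝ) → Cl}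
    (hF : ∀ i, JointSmooth (F i)) (j : Fin m) (x u : Fin m → ℝ) :
    pdu j (fun x u => ∑ i ∈ s, F i x u) x u = ∑ i ∈ s, pdu j (F i) x u := by
  simp only [pdu]
  rw [fderiv_fun_sum fun i _ => (hF i).differentiableAt_snd x u]
  simp

theorem pdx_add (hf : JointSmooth f) (hg : JointSmooth g) (j : Fin m) (x u : Fin m → ℝ) :
    pdx j (fun x u => f x u + g x u) x u = pdx j f x u + pdx j g x u := by
  simp only [pdx]
  rw [fderiv_fun_add (hf.differentiableAt_fst x u) (hg.differentiableAt_fst x u)]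
  simp

theorem pdu_add (hf : JointSmooth f) (hg : JointSmooth g) (j : Fin m) (x u : Fin m → ℝ) :
    pdu j (fun x u => f x u + g x u) x u = pdu j f x u + pdu j g x u := by
  simp only [pdu]
  rw [fderiv_fun_add (hf.differentiableAt_snd x u) (hg.differentiableAt_snd x u)]
  simp

theorem pdx_smul (hf : JointSmooth f) (a : (Fin m → ℝ) → ℝ) (j : Fin m)
    (x u : Fin m → ℝ) : pdx j (fun x u => a u • f x u) x u = a u • pdx j f x u := by
  simp only [pdx]
  rw [fderiv_fun_const_smul (hf.differentiableAt_fst x u)]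
  simp

theorem pdu_smul (hf : JointSmooth f) (c : ℝ) (j : Fin m) (x u : Fin m → ℝ) :
    pdu j (fun x u => c • f x u) x u = c • pdu j f x u := by
  simp only [pdu]
  rw [fderiv_fun_const_smul (hf.differentiableAt_snd x u)]
  simp

theorem pdu_const_mul (hf : JointSmooth f) (a : Cl) (j : Fin m) (x u : Fin m → ℝ) :
    pdu j (fun x u => a * f x u) x u = a * pdu j f x u := by
  simp only [pdu]
  rw [fderiv_const_mul (hf.differentiableAt_snd x u)]
  simp

theorem pdu_coord_smul (hf : JointSmooth f) (i j : Fin m) (x u : Fin m → ℝ) :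
    pdu j (fun x u => u i • f x u) x u
      = (if i = j then f x u else 0) + u i • pdu j f x u := by
  have h := (hasFDerivAt_apply (𝕜 := ℝ) i u).smul (hf.differentiableAt_snd x u).hasFDerivAt
  have h' : fderiv ℝ (fun v => v i • f x v) u = _ := h.fderiv
  simp only [pdu, h']
  by_cases hij : i = j <;> simp [hij, add_comm]

theorem pdu_emb_mul (hf : JointSmooth f) (e : Fin m → Cl) (j : Fin m) (x u : Fin m → ℝ) :
    pdu j (fun x u => emb e u * f x u) x u = e j * f x u + emb e u * pdu j f x u := by
  simp only [emb, Finset.sum_mul, smul_mul_assoc]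
  rw [pdu_sum _ fun i => (hf.const_mul (e i)).coord_smul i]
  simp only [pdu_coord_smul (hf.const_mul (e _)), pdu_const_mul hf, Finset.sum_add_distrib]
  simp

theorem fderiv_fderiv_comm (hf : JointSmooth f) (v w p : (Fin m → ℝ) × (Fin m → ℝ)) :
    fderiv ℝ (fun p => fderiv ℝ
        (fun p : (Fin m → ℝ) × (Fin m → ℝ) => f p.1 p.2) p v) p w
      = fderiv ℝ (fun p => fderiv ℝ
        (fun p : (Fin m → ℝ) × (Fin m → ℝ) => f p.1 p.2) p w) p v := by
  have hd : DifferentiableAt ℝ (fderiv ℝ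
      (fun p : (Fin m → ℝ) × (Fin m → ℝ) => f p.1 p.2)) p :=
    (ContDiff.fderiv_right (m := ∞) hf (by simp)).differentiable (by simp) p
  have hs : IsSymmSndFDerivAt ℝ (fun p : (Fin m → ℝ) × (Fin m → ℝ) => f p.1 p.2) p :=
    (ContDiff.contDiffAt hf).isSymmSndFDerivAt (by
      simpa using (WithTop.coe_le_coe.2 le_top : ((2 : ℕ∞) : WithTop ℕ∞) ≤ ∞))
  rw [fderiv_clm_apply hd (differentiableAt_const v),
    fderiv_clm_apply hd (differentiableAt_const w)]
  simpa using hs w v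

theorem pdu_pdx_comm (hf : JointSmooth f) (i j : Fin m) (x u : Fin m → ℝ) :
    pdu i (pdx j f) x u = pdx j (pdu i f) x u := by
  rw [(hf.pdx j).pdu_eq, (hf.pdu i).pdx_eq]
  simp only [hf.pdx_eq, hf.pdu_eq]
  exact fderiv_fderiv_comm hf _ _ _

theorem pdu_pdu_comm (hf : JointSmooth f) (i j : Fin m) (x u : Fin m → ℝ) :
    pdu i (pdu j f) x u = pdu j (pdu i f) x u := by
  rw [(hf.pdu j).pdu_eq, (hf.pdu i).pdu_eq]
  simp only [hf.pdu_eq]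
  exact fderiv_fderiv_comm hf _ _ _

theorem diracx_add (hf : JointSmooth f) (hg : JointSmooth g) (e : Fin m → Cl) :
    diracx e (fun x u => f x u + g x u) = fun x u => diracx e f x u + diracx e g x u := by
  funext x u
  simp only [diracx, pdx_add hf hg, mul_add, Finset.sum_add_distrib]

theorem diracx_smul (hf : JointSmooth f) (e : Fin m → Cl) (c : ℝ) :
    diracx e (fun x u => c • f x u) = fun x u => c • diracx e f x u := by
  funext x u
  simp only [diracx, pdx_smul hf (fun _ => c), mul_smul_comm, Finset.smul_sum]

theorem diracx_zero (e : Fin m → Cl) :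
    diracx e (fun _ _ => 0) = fun _ _ => 0 := by
  funext x u
  simp [diracx, pdx]

theorem diracu_add (hf : JointSmooth f) (hg : JointSmooth g) (e : Fin m → Cl) :
    diracu e (fun x u => f x u + g x u) = fun x u => diracu e f x u + diracu e g x u := by
  funext x u
  simp only [diracu, pdu_add hf hg, mul_add, Finset.sum_add_distrib]

theorem diracu_smul (hf : JointSmooth f) (e : Fin m → Cl) (c : ℝ) :
    diracu e (fun x u => c • f x u) = fun x u => c • diracu e f x u := by
  funext x u
  simp only [diracu, pdu_smul hf, mul_smul_comm, Finset.smul_sum]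

theorem PpU_add (hf : JointSmooth f) (hg : JointSmooth g) (e : Fin m → Cl) (k : ℕ) :
    PpU e k (fun x u => f x u + g x u) = fun x u => PpU e k f x u + PpU e k g x u := by
  funext x u
  simp only [PpU, diracu_add hf hg, mul_add, smul_add]
  abel

theorem PmU_add (hf : JointSmooth f) (hg : JointSmooth g) (e : Fin m → Cl) (k : ℕ) :
    PmU e k (fun x u => f x u + g x u) = fun x u => PmU e k f x u + PmU e k g x u := by
  funext x u
  simp only [PmU, diracu_add hf hg, mul_add, smul_add]
  abel

theorem PpU_smul (hf : JointSmooth f) (e : Fin m → Cl) (k : ℕ) (c : ℝ) :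
    PpU e k (fun x u => c • f x u) = fun x u => c • PpU e k f x u := by
  funext x u
  simp only [PpU, diracu_smul hf, mul_smul_comm, smul_add, smul_comm c]

theorem PmU_smul (hf : JointSmooth f) (e : Fin m → Cl) (k : ℕ) (c : ℝ) :
    PmU e k (fun x u => c • f x u) = fun x u => c • PmU e k f x u := by
  funext x u
  simp only [PmU, diracu_smul hf, mul_smul_comm, smul_neg, smul_comm c]

theorem PpDx_zero (e : Fin m → Cl) (k : ℕ) : PpDx e k (fun _ _ => 0) = fun _ _ => 0 := by
  funext x u
  simp [PpDx, diracx_zero, PpU, diracu, pdu]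

theorem PmDx_zero (e : Fin m → Cl) (k : ℕ) : PmDx e k (fun _ _ => 0) = fun _ _ => 0 := by
  funext x u
  simp [PmDx, diracx_zero, PmU, diracu, pdu]

theorem PpDx_linear (hf : JointSmooth f) (hg : JointSmooth g) (e : Fin m → Cl) (k : ℕ)
    (a b : ℝ) : PpDx e k (fun x u => a • f x u + b • g x u)
      = fun x u => a • PpDx e k f x u + b • PpDx e k g x u := by
  simp only [PpDx]
  rw [diracx_add (hf.smul a) (hg.smul b), diracx_smul hf, diracx_smul hg,
    PpU_add ((hf.diracx e).smul a) ((hg.diracx e).smul b), PpU_smul (hf.diracx e),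
    PpU_smul (hg.diracx e)]

theorem PmDx_linear (hf : JointSmooth f) (hg : JointSmooth g) (e : Fin m → Cl) (k : ℕ)
    (a b : ℝ) : PmDx e k (fun x u => a • f x u + b • g x u)
      = fun x u => a • PmDx e k f x u + b • PmDx e k g x u := by
  simp only [PmDx]
  rw [diracx_add (hf.smul a) (hg.smul b), diracx_smul hf, diracx_smul hg,
    PmU_add ((hf.diracx e).smul a) ((hg.diracx e).smul b), PmU_smul (hf.diracx e),
    PmU_smul (hg.diracx e)]

theorem CliffordRel.mul_self {e : Fin m → Cl} (he : CliffordRel e) (j : Fin m) :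
    e j * e j = -1 := by
  have h := he j j
  rw [if_pos rfl, ← two_smul ℝ (e j * e j), Algebra.algebraMap_eq_smul_one,
    show (-2 : ℝ) = 2 * (-1) by norm_num, mul_smul] at h
  simpa using smul_right_injective Cl (two_ne_zero (α := ℝ)) h

theorem CliffordRel.mul_emb {e : Fin m → Cl} (he : CliffordRel e) (j : Fin m)
    (u : Fin m → ℝ) : e j * emb e u = -(emb e u * e j) - (2 * u j) • (1 : Cl) := by
  have h : e j * emb e u + emb e u * e j = -((2 * u j) • (1 : Cl)) := by
    simp only [emb, Finset.mul_sum, Finset.sum_mul, mul_smul_comm, smul_mul_assoc,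
      ← Finset.sum_add_distrib, ← smul_add, he j, Algebra.algebraMap_eq_smul_one]
    simp [ite_smul, smul_smul, mul_comm]
  rw [← sub_eq_of_eq_add h.symm]
  abel

theorem diracu_emb_mul {e : Fin m → Cl} (he : CliffordRel e) (hf : JointSmooth f)
    (x u : Fin m → ℝ) :
    diracu e (fun x u => emb e u * f x u) x u
      = -((m : ℝ) • f x u) - emb e u * diracu e f x u
        - (2 : ℝ) • ∑ j, u j • pdu j f x u := by
  simp only [diracu, pdu_emb_mul hf, mul_add, ← mul_assoc, he.mul_self, he.mul_emb,
    sub_mul, neg_mul, one_mul, smul_mul_assoc, Finset.sum_add_distrib,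
    Finset.sum_sub_distrib, Finset.sum_neg_distrib, mul_smul, Finset.smul_sum,
    Finset.mul_sum]
  simp [← Nat.cast_smul_eq_nsmul ℝ]
  abel

theorem pdu_diracu (hf : JointSmooth f) (e : Fin m → Cl) (i : Fin m) (x u : Fin m → ℝ) :
    pdu i (diracu e f) x u = ∑ j, e j * pdu i (pdu j f) x u := by
  refine (pdu_sum Finset.univ (fun j => (hf.pdu j).const_mul (e j)) i x u).trans ?_
  simp only [pdu_const_mul (hf.pdu _)]

theorem diracu_diracu {e : Fin m → Cl} (he : CliffordRel e) (hf : JointSmooth f)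
    (x u : Fin m → ℝ) : diracu e (diracu e f) x u = -∑ j, pdu j (pdu j f) x u := by
  have hS : diracu e (diracu e f) x u
      = ∑ i, ∑ j, (e i * e j) * pdu i (pdu j f) x u := by
    rw [diracu]
    simp only [pdu_diracu hf, Finset.mul_sum, mul_assoc]
  have hS' : diracu e (diracu e f) x u
      = ∑ i, ∑ j, (e j * e i) * pdu i (pdu j f) x u := by
    rw [hS, Finset.sum_comm]
    refine Finset.sum_congr rfl fun i _ => Finset.sum_congr rfl fun j _ => ?_
    rw [pdu_pdu_comm hf]
  have h2 : (2 : ℝ) • diracu e (diracu e f) x u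
      = (2 : ℝ) • -∑ j, pdu j (pdu j f) x u := by
    rw [two_smul]
    nth_rewrite 1 [hS]
    rw [hS', ← Finset.sum_add_distrib]
    simp only [← Finset.sum_add_distrib, ← add_mul, he _ _,
      Algebra.algebraMap_eq_smul_one, smul_mul_assoc, one_mul]
    simp [ite_smul, Finset.smul_sum]
  exact smul_right_injective Cl (two_ne_zero (α := ℝ)) h2

theorem euler_diracu (hf : JointSmooth f) (e : Fin m → Cl) {r : ℝ} {x : Fin m → ℝ}
    (hE : ∀ u, ∑ j, u j • pdu j f x u = r • f x u) (u : Fin m → ℝ) :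
    ∑ j, u j • pdu j (diracu e f) x u = (r - 1) • diracu e f x u := by
  have hj : ∀ i, ∑ j, u j • pdu j (pdu i f) x u = (r - 1) • pdu i f x u := fun i => by
    have h : pdu i (fun x u => ∑ j, u j • pdu j f x u) x u
        = pdu i (fun x u => r • f x u) x u := by
      simp only [pdu] at hE ⊢
      simp only [hE]
    rw [pdu_sum _ fun j => (hf.pdu j).coord_smul j, pdu_smul hf] at h
    simp only [pdu_coord_smul (hf.pdu _), Finset.sum_add_distrib, Finset.sum_ite_eq',
      Finset.mem_univ, if_true] at h
    rw [sub_smul, one_smul, ← h, add_sub_cancel_left]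
    exact Finset.sum_congr rfl fun j _ => by rw [pdu_pdu_comm hf]
  simp only [pdu_diracu hf, Finset.smul_sum, ← mul_smul_comm]
  rw [Finset.sum_comm]
  simp only [← Finset.mul_sum, hj]
  simp only [diracu, mul_smul_comm, Finset.smul_sum]

/-- `f` is smooth and, for each `x`, harmonic and of Euler degree `k` in `u`. -/
structure HarmonicHom (k : ℕ) (f : (Fin m → ℝ) → (Fin m → ℝ) → Cl) : Prop where
  smooth : JointSmooth f
  euler : ∀ x u, ∑ j, u j • pdu j f x u = (k : ℝ) • f x u
  harmonic : ∀ x u, ∑ j, pdu j (pdu j f) x u = 0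

namespace HarmonicHom

variable {k : ℕ}

theorem add (hf : HarmonicHom k f) (hg : HarmonicHom k g) :
    HarmonicHom k (fun x u => f x u + g x u) where
  smooth := hf.smooth.add hg.smooth
  euler x u := by
    simp only [pdu_add hf.smooth hg.smooth, smul_add, Finset.sum_add_distrib, hf.euler,
      hg.euler]
  harmonic x u := by
    have h : ∀ j, pdu j (fun x u => f x u + g x u)
        = fun x u => pdu j f x u + pdu j g x u :=
      fun j => funext₂ fun x u => pdu_add hf.smooth hg.smooth j x u
    simp only [h, pdu_add (hf.smooth.pdu _) (hg.smooth.pdu _), Finset.sum_add_distrib,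
      hf.harmonic, hg.harmonic, add_zero]

theorem smul (hf : HarmonicHom k f) (c : ℝ) : HarmonicHom k (fun x u => c • f x u) where
  smooth := hf.smooth.smul c
  euler x u := by
    simp only [pdu_smul hf.smooth, smul_comm _ c, ← Finset.smul_sum, hf.euler]
  harmonic x u := by
    have h : ∀ j, pdu j (fun x u => c • f x u) = fun x u => c • pdu j f x u :=
      fun j => funext₂ fun x u => pdu_smul hf.smooth c j x u
    simp only [h, pdu_smul (hf.smooth.pdu _), ← Finset.smul_sum, hf.harmonic, smul_zero]

theorem diracx (hf : HarmonicHom k f) (e : Fin m → Cl) : HarmonicHom k (diracx e f) := by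
  have hc : ∀ {g : (Fin m → ℝ) → (Fin m → ℝ) → Cl}, JointSmooth g → ∀ i,
      pdu i (_root_.diracx e g) = _root_.diracx e (pdu i g) := fun {g} hg i => by
    funext x u
    refine (pdu_sum Finset.univ (fun j => (hg.pdx j).const_mul (e j)) i x u).trans ?_
    simp only [pdu_const_mul (hg.pdx _), pdu_pdx_comm hg]
    rfl
  have hs : ∀ {F : Fin m → (Fin m → ℝ) → (Fin m → ℝ) → Cl}, (∀ i, JointSmooth (F i)) →
      ∀ x u, _root_.diracx e (fun x u => ∑ i, F i x u) x u
        = ∑ i, _root_.diracx e (F i) x u := fun {F} hF x u => by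
    simp only [_root_.diracx, pdx_sum _ hF, Finset.mul_sum]
    exact Finset.sum_comm
  refine ⟨hf.smooth.diracx e, fun x u => ?_, fun x u => ?_⟩
  · have h := hs (fun i => (hf.smooth.pdu i).coord_smul i) x u
    simp only [hf.euler, diracx_smul hf.smooth] at h
    rw [h]
    refine Finset.sum_congr rfl fun i _ => ?_
    rw [hc hf.smooth]
    simp only [_root_.diracx, pdx_smul (hf.smooth.pdu i) (fun u => u i), mul_smul_comm,
      Finset.smul_sum]
  · have h := hs (fun i => (hf.smooth.pdu i).pdu i) x u
    simp only [hf.harmonic, diracx_zero] at h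
    simp only [hc hf.smooth, hc (hf.smooth.pdu _), ← h]

theorem diracu_emb_diracu {e : Fin m → Cl} (he : CliffordRel e) (hf : HarmonicHom k f)
    (x u : Fin m → ℝ) :
    diracu e (fun x u => emb e u * diracu e f x u) x u
      = -(((m : ℝ) + 2 * k - 2) • diracu e f x u) := by
  rw [diracu_emb_mul he (hf.smooth.diracu e), diracu_diracu he hf.smooth, hf.harmonic,
    euler_diracu hf.smooth e (hf.euler x), neg_zero, mul_zero]
  module

theorem PmU_PmU {e : Fin m → Cl} (he : CliffordRel e) (hf : HarmonicHom k f)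
    (hc : (m : ℝ) + 2 * k - 2 ≠ 0) : PmU e k (PmU e k f) = PmU e k f := by
  have hs := (hf.smooth.diracu e).emb_mul e
  have h : PmU e k f = fun x u => (-((m : ℝ) + 2 * k - 2)⁻¹) •
      (emb e u * diracu e f x u) := by
    funext x u
    rw [neg_smul, PmU]
  conv_lhs => rw [h, PmU_smul hs]
  rw [h]
  funext x u
  rw [PmU, hf.diracu_emb_diracu he, mul_neg, mul_smul_comm, smul_neg, smul_neg,
    inv_smul_smul₀ hc, smul_neg, neg_neg]

theorem PpU_eq_sub (e : Fin m → Cl) (k : ℕ) (f : (Fin m → ℝ) → (Fin m → ℝ) → Cl) :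
    PpU e k f = fun x u => f x u + (-1 : ℝ) • PmU e k f x u := by
  funext x u
  simp [PpU, PmU]

theorem PmU_PpU {e : Fin m → Cl} (he : CliffordRel e) (hf : HarmonicHom k f)
    (hc : (m : ℝ) + 2 * k - 2 ≠ 0) : PmU e k (PpU e k f) = fun _ _ => 0 := by
  rw [PpU_eq_sub, PmU_add hf.smooth ((hf.smooth.PmU e k).smul _),
    PmU_smul (hf.smooth.PmU e k), hf.PmU_PmU he hc]
  simp

theorem PpU_PpU {e : Fin m → Cl} (he : CliffordRel e) (hf : HarmonicHom k f)
    (hc : (m : ℝ) + 2 * k - 2 ≠ 0) : PpU e k (PpU e k f) = PpU e k f := by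
  rw [PpU_eq_sub e k (PpU e k f), hf.PmU_PpU he hc]
  simp

theorem PpU_PmU {e : Fin m → Cl} (he : CliffordRel e) (hf : HarmonicHom k f)
    (hc : (m : ℝ) + 2 * k - 2 ≠ 0) : PpU e k (PmU e k f) = fun _ _ => 0 := by
  rw [PpU_eq_sub e k (PmU e k f), hf.PmU_PmU he hc]
  simp

end HarmonicHom

theorem IsHomPoly.contDiff {k : ℕ} {q : (Fin m → ℝ) → Cl} (hq : IsHomPoly k q) :
    ContDiff ℝ ∞ q := by
  induction hq using Submodule.span_induction with
  | mem q hq =>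
    obtain ⟨α, c, -, rfl⟩ := hq
    exact (contDiff_prod fun i _ => (contDiff_apply ℝ ℝ i).pow (α i)).smul contDiff_const
  | zero => exact contDiff_const
  | add _ _ _ _ h₁ h₂ => exact h₁.add h₂
  | smul c _ _ h => exact h.const_smul c

theorem IsHomPoly.jointSmooth {k : ℕ} {q : (Fin m → ℝ) → Cl} (hq : IsHomPoly k q) :
    JointSmooth (fun _ : Fin m → ℝ => q) :=
  hq.contDiff.comp contDiff_snd

theorem IsHomPoly.map_smul {k : ℕ} {q : (Fin m → ℝ) → Cl} (hq : IsHomPoly k q) (t : ℝ)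
    (u : Fin m → ℝ) : q (t • u) = t ^ k • q u := by
  induction hq using Submodule.span_induction with
  | mem q hq =>
    obtain ⟨α, c, rfl, rfl⟩ := hq
    simp [mul_pow, Finset.prod_mul_distrib, Finset.prod_pow_eq_pow_sum, mul_smul]
  | zero => simp
  | add _ _ _ _ h₁ h₂ => simp [h₁, h₂]
  | smul c _ _ h => simp [h, smul_comm c]

theorem IsHomPoly.euler {k : ℕ} {q : (Fin m → ℝ) → Cl} (hq : IsHomPoly k q)
    (u : Fin m → ℝ) : ∑ j, u j • pd j q u = (k : ℝ) • q u := by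
  have hlin : ∑ j, u j • pd j q u = fderiv ℝ q u u := by
    have hu : u = ∑ j, u j • Pi.single j (1 : ℝ) := by
      funext i
      simp [Finset.sum_apply, Pi.single_apply]
    conv_rhs => rw [hu, map_sum, ← hu]
    simp only [_root_.map_smul, pd]
  have h₁ : HasDerivAt (fun t : ℝ => q (t • u)) (fderiv ℝ q u u) 1 := by
    have hd : HasFDerivAt q (fderiv ℝ q u) ((1 : ℝ) • u) := by
      rw [one_smul]
      exact (hq.contDiff.differentiable (by simp) u).hasFDerivAt
    simpa [Function.comp_def] using
      hd.comp_hasDerivAt (1 : ℝ) ((hasDerivAt_id (1 : ℝ)).smul_const u)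
  have h₂ : HasDerivAt (fun t : ℝ => q (t • u)) ((k : ℝ) • q u) 1 := by
    simp only [hq.map_smul]
    simpa using (hasDerivAt_pow k (1 : ℝ)).smul_const (q u)
  rw [hlin, h₁.unique h₂]

theorem HarmonicHom.of_monogenic {k : ℕ} {e : Fin m → Cl} (he : CliffordRel e)
    (hf : JointSmooth f) (hM : ∀ x, IsHomPoly k (f x) ∧ dirac e (f x) = 0) :
    HarmonicHom k f := by
  refine ⟨hf, fun x u => (hM x).1.euler u, fun x u => ?_⟩
  have h0 : diracu e f = fun _ _ => 0 := funext fun x => (hM x).2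
  rw [← neg_eq_zero, ← diracu_diracu he hf, h0]
  simp [diracu, pdu]

theorem PpU_of_monogenic {k : ℕ} {e : Fin m → Cl} (hM : ∀ x, dirac e (f x) = 0) :
    PpU e k f = f := by
  funext x u
  have h0 : diracu e f x u = 0 := congrFun (hM x) u
  simp [PpU, h0]

theorem diracu_emb_mul_monogenic {k : ℕ} (hk : 1 ≤ k) {e : Fin m → Cl}
    (he : CliffordRel e) {q : (Fin m → ℝ) → Cl} (hq : IsHomPoly (k - 1) q)
    (hD : dirac e q = 0) (x u : Fin m → ℝ) :
    diracu e (fun _ u => emb e u * q u) x u = -(((m : ℝ) + 2 * k - 2) • q u) := by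
  have h0 : diracu e (fun _ => q) x u = 0 := congrFun hD u
  have hE : ∑ j, u j • pdu j (fun _ => q) x u = ((k - 1 : ℕ) : ℝ) • q u := hq.euler u
  rw [diracu_emb_mul he hq.jointSmooth, h0, hE, Nat.cast_sub hk, Nat.cast_one]
  simp only [mul_zero]
  module

theorem HarmonicHom.of_emb_mul_monogenic {k : ℕ} (hk : 1 ≤ k) {e : Fin m → Cl}
    (he : CliffordRel e) (hf : JointSmooth f)
    (hM : ∀ x, ∃ q : (Fin m → ℝ) → Cl, IsHomPoly (k - 1) q ∧ dirac e q = 0 ∧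
      f x = fun u => emb e u * q u) :
    HarmonicHom k f := by
  refine ⟨hf, fun x u => ?_, fun x u => ?_⟩
  · obtain ⟨q, hq, -, hfq⟩ := hM x
    have h : ∀ j, pdu j f x u = pdu j (fun _ u => emb e u * q u) x u := fun j => by
      simp only [pdu, hfq]
    have hE : ∑ j, u j • pdu j (fun _ => q) x u = ((k - 1 : ℕ) : ℝ) • q u := hq.euler u
    simp only [h, pdu_emb_mul hq.jointSmooth, smul_add, Finset.sum_add_distrib,
      ← mul_smul_comm, ← Finset.mul_sum, hE, hfq]
    simp only [mul_smul_comm, ← smul_mul_assoc, ← Finset.sum_mul]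
    rw [Nat.cast_sub hk, Nat.cast_one, ← emb]
    simp only [smul_mul_assoc]
    module
  · obtain ⟨q, hq, hD, hfq⟩ := hM x
    have h : diracu e f x = fun u => -(((m : ℝ) + 2 * k - 2) • q u) := by
      funext u
      rw [← diracu_emb_mul_monogenic hk he hq hD x u]
      simp only [diracu, pdu, hfq]
    have hq0 : diracu e (fun _ u => (-((m : ℝ) + 2 * k - 2)) • q u) x u = 0 := by
      rw [diracu_smul hq.jointSmooth]
      have h0 : diracu e (fun _ => q) x u = 0 := congrFun hD u
      simp [h0]
    rw [← neg_eq_zero, ← diracu_diracu he hf, ← hq0]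
    simp only [neg_smul]
    rw [diracu, diracu]
    simp only [pdu, h]

theorem PmU_of_emb_mul_monogenic {k : ℕ} (hk : 1 ≤ k) {e : Fin m → Cl}
    (he : CliffordRel e) (hc : (m : ℝ) + 2 * k - 2 ≠ 0)
    (hM : ∀ x, ∃ q : (Fin m → ℝ) → Cl, IsHomPoly (k - 1) q ∧ dirac e q = 0 ∧
      f x = fun u => emb e u * q u) :
    PmU e k f = f := by
  funext x u
  obtain ⟨q, hq, hD, hfq⟩ := hM x
  have h : diracu e f x u = -(((m : ℝ) + 2 * k - 2) • q u) := by
    rw [← diracu_emb_mul_monogenic hk he hq hD x u]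
    simp only [diracu, pdu, hfq]
  rw [PmU, h, hfq, mul_neg, mul_smul_comm, smul_neg, neg_neg, inv_smul_smul₀ hc]

end RaritaSchwinger

/-- **Factorization `D₂ = D₁ D₁ᵀ`.** For `m ≥ 3`, `k ≥ 1`, the 2×2 operator
matrix `D₁` with entries `D₁[1,1] = −R_k P_k^+`, `D₁[1,2] = 2 T_k^* P_k^+ / √(c(c−4))`,
`D₁[2,1] = 2 T_k P_k^- / (c−4)`, `D₁[2,2] = √(c/(c−4)) Q_k P_k^-` (`c = m+2k`) satisfies
`D₁ D₁ᵀ = D₂`, where `D₂[1,1] = R_k² P_k^+`, `D₂[1,2] = −2 R_k T_k P_k^- /(c−4)`,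
`D₂[2,1] = 2 Q_k T_k^* P_k^+/(c−4)`, `D₂[2,2] = (c/(c−4)) Q_k² P_k^-`: for all smooth
`f₁ ∈ C^∞(ℝ^m, M_k)`, `f₂ ∈ C^∞(ℝ^m, uM_{k-1})`, applying `D₁ᵀ` and then `D₁`
componentwise to the pair `(f₁, f₂)` yields the same pair as applying `D₂`. -/
theorem stmt13 {m k : ℕ} (hm : 3 ≤ m) (hk : 1 ≤ k) {Cl : Type*} [NormedRing Cl]
    [NormedAlgebra ℝ Cl] (e : Fin m → Cl) (hrel : CliffordRel e)
    (f₁ f₂ : (Fin m → ℝ) → (Fin m → ℝ) → Cl)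
    (hf₁ : ContDiff ℝ (⊤ : ℕ∞) (fun p : (Fin m → ℝ) × (Fin m → ℝ) => f₁ p.1 p.2))
    (hf₂ : ContDiff ℝ (⊤ : ℕ∞) (fun p : (Fin m → ℝ) × (Fin m → ℝ) => f₂ p.1 p.2))
    (hf₁M : ∀ x, IsHomPoly k (f₁ x) ∧ dirac e (f₁ x) = 0)
    (hf₂M : ∀ x, ∃ q : (Fin m → ℝ) → Cl, IsHomPoly (k - 1) q ∧ dirac e q = 0 ∧
      f₂ x = fun u => emb e u * q u) :
    (∀ x u, D1fst e k (D1Tfst e k f₁ f₂) (D1Tsnd e k f₁ f₂) x u = D2fst e k f₁ f₂ x u) ∧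
      (∀ x u, D1snd e k (D1Tfst e k f₁ f₂) (D1Tsnd e k f₁ f₂) x u = D2snd e k f₁ f₂ x u) := by
  have hm' : (3 : ℝ) ≤ m := by exact_mod_cast hm
  have hk' : (1 : ℝ) ≤ k := by exact_mod_cast hk
  have hc : (m : ℝ) + 2 * k - 2 ≠ 0 := by linarith
  have h₁ : HarmonicHom k f₁ := .of_monogenic hrel hf₁ hf₁M
  have h₂ : HarmonicHom k f₂ := .of_emb_mul_monogenic hk hrel hf₂ hf₂M
  have hP₁ : PpU e k f₁ = f₁ := PpU_of_monogenic fun x => (hf₁M x).2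
  have hP₂ : PmU e k f₂ = f₂ := PmU_of_emb_mul_monogenic hk hrel hc hf₂M
  have hd₁ := h₁.diracx e
  have hd₂ := h₂.diracx e
  set a : ℝ := 2 / Real.sqrt (((m : ℝ) + 2 * k) * ((m : ℝ) + 2 * k - 4)) with ha
  set b : ℝ := Real.sqrt (((m : ℝ) + 2 * k) / ((m : ℝ) + 2 * k - 4)) with hb
  set d : ℝ := 2 / ((m : ℝ) + 2 * k - 4) with hd
  have hp : 0 < (m : ℝ) + 2 * k := by linarith
  have hp4 : 0 < (m : ℝ) + 2 * k - 4 := by linarith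
  have hbb : b * b = ((m : ℝ) + 2 * k) / ((m : ℝ) + 2 * k - 4) :=
    Real.mul_self_sqrt (by positivity)
  have hba : b * a = d := by
    have hs := Real.sqrt_pos.2 hp
    have hs4 := Real.sqrt_pos.2 hp4
    rw [ha, hb, hd, Real.sqrt_div hp.le, Real.sqrt_mul hp.le]
    field_simp
    rw [Real.sq_sqrt hp4.le]
  have hT₁ : D1Tfst e k f₁ f₂
      = fun x u => (-1 : ℝ) • PpDx e k f₁ x u + d • PpDx e k f₂ x u := by
    funext x u
    simp [D1Tfst, hP₁, hP₂, ← hd]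
  have hT₂ : D1Tsnd e k f₁ f₂
      = fun x u => a • PmDx e k f₁ x u + b • PmDx e k f₂ x u := by
    funext x u
    simp only [D1Tsnd, hP₁, hP₂, ← ha, ← hb]
  have hA := (hd₁.smul (-1)).add (hd₂.smul d)
  have hB := (hd₁.smul a).add (hd₂.smul b)
  have hT₁' : D1Tfst e k f₁ f₂ = PpU e k
      (fun x u => (-1 : ℝ) • diracx e f₁ x u + d • diracx e f₂ x u) := by
    rw [hT₁, PpU_add (hd₁.smooth.smul _) (hd₂.smooth.smul _), PpU_smul hd₁.smooth,
      PpU_smul hd₂.smooth]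
    rfl
  have hT₂' : D1Tsnd e k f₁ f₂ = PmU e k
      (fun x u => a • diracx e f₁ x u + b • diracx e f₂ x u) := by
    rw [hT₂, PmU_add (hd₁.smooth.smul _) (hd₂.smooth.smul _), PmU_smul hd₁.smooth,
      PmU_smul hd₂.smooth]
    rfl
  have hpp : PpU e k (D1Tfst e k f₁ f₂) = D1Tfst e k f₁ f₂ := by
    rw [hT₁', hA.PpU_PpU hrel hc]
  have hmp : PmU e k (D1Tfst e k f₁ f₂) = fun _ _ => 0 := by
    rw [hT₁', hA.PmU_PpU hrel hc]
  have hmm : PmU e k (D1Tsnd e k f₁ f₂) = D1Tsnd e k f₁ f₂ := by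
    rw [hT₂', hB.PmU_PmU hrel hc]
  have hpm : PpU e k (D1Tsnd e k f₁ f₂) = fun _ _ => 0 := by
    rw [hT₂', hB.PpU_PmU hrel hc]
  refine ⟨fun x u => ?_, fun x u => ?_⟩
  · rw [D1fst, D2fst, hpp, hpm, PmDx_zero, hT₁, hP₁, hP₂, ← hd,
      PpDx_linear (f := PpDx e k f₁) (hd₁.smooth.PpU e k)
        (g := PpDx e k f₂) (hd₂.smooth.PpU e k)]
    module
  · rw [D1snd, D2snd, hmp, hmm, PpDx_zero, hT₂, hP₁, hP₂, ← hd, ← hb, ← hbb, ← hba,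
      PmDx_linear (f := PmDx e k f₁) (hd₁.smooth.PmU e k)
        (g := PmDx e k f₂) (hd₂.smooth.PmU e k)]
    module
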